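/- arXiv:1805.01355 — 5 statements merged into one kernel-verified Lean document; each statement's English description precedes it below -/
import Mathlib

section
/- For all k ≥ 2 and n ≥ 2 there exists a length function L : [k]^n → ℕ satisfying Kraft's inequality Σ_{x^n ∈ [k]^n} 2^{−L(x^n)} ≤ 1 such that for every stationary Markov chain (K,π) ∈ M₂(k), r_n(L,(K,π)) ≤ (2k²/n)·log₂(n/k² + 1) + k²/n + (log₂ k + 3)/n. Consequently the minimax redundancy R_n(k) over all stationary Markov sources on [k] satisfies R_n(k) ≤ (2k²/n)·log₂(n/k² + 1) + k²/n + (log₂ k + 3)/n. -/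
open scoped BigOperators

namespace Stmt1

/-- `K` is a row-stochastic (transition) matrix. -/
def IsStochastic {k : ℕ} (K : Matrix (Fin k) (Fin k) ℝ) : Prop :=
  (∀ i j, 0 ≤ K i j) ∧ ∀ i, ∑ j, K i j = 1

/-- `π` is a probability vector on `Fin k`. -/
def IsProbVec {k : ℕ} (π : Fin k → ℝ) : Prop :=
  (∀ i, 0 ≤ π i) ∧ ∑ i, π i = 1

/-- Membership in `M₂(k)`: `(K, π)` is a stationary Markov chain on `[k]`. -/
def MemM2 {k : ℕ} (K : Matrix (Fin k) (Fin k) ℝ) (π : Fin k → ℝ) : Prop :=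
  IsStochastic K ∧ IsProbVec π ∧ ∀ j, ∑ i, π i * K i j = π j

/-- The law of the stationary chain `X^n`:
`p(x^n) = π_{x₁} ∏_{i=1}^{n-1} K_{x_i x_{i+1}}`. -/
noncomputable def pathProb {k n : ℕ} (K : Matrix (Fin k) (Fin k) ℝ) (π : Fin k → ℝ)
    (x : Fin n → Fin k) : ℝ :=
  (if h : 0 < n then π (x ⟨0, h⟩) else 1) *
    ∏ i : Fin (n - 1),
      K (x ⟨i.1, by have := i.2; omega⟩) (x ⟨i.1 + 1, by have := i.2; omega⟩)

/-- Shannon entropy (base 2) of a distribution on `(Fin k)^n`. -/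
noncomputable def entropy {k n : ℕ} (p : (Fin n → Fin k) → ℝ) : ℝ :=
  ∑ x : Fin n → Fin k, p x * Real.logb 2 (1 / p x)

/-- Kraft's inequality for a length function. -/
def Kraft {k n : ℕ} (L : (Fin n → Fin k) → ℕ) : Prop :=
  ∑ x : Fin n → Fin k, (2 : ℝ) ^ (-(L x : ℤ)) ≤ 1

/-- Redundancy `r_n(L, (K,π)) = (1/n)(E[L(X^n)] − H(X^n))`. -/
noncomputable def redundancy {k n : ℕ} (L : (Fin n → Fin k) → ℕ)
    (K : Matrix (Fin k) (Fin k) ℝ) (π : Fin k → ℝ) : ℝ :=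
  (1 / (n : ℝ)) *
    ((∑ x : Fin n → Fin k, pathProb K π x * (L x : ℝ)) -
      entropy (fun x : Fin n → Fin k => pathProb K π x))

/-- The minimax redundancy `R_n(k)` over all stationary Markov sources on `[k]`. -/
noncomputable def minimaxRedundancyM2 (k n : ℕ) : ℝ :=
  sInf {r : ℝ | ∃ L : (Fin n → Fin k) → ℕ, Kraft L ∧
    r = sSup {s : ℝ | ∃ K π, MemM2 K π ∧ s = redundancy L K π}}

/-!
The code is the Shannon code of the normalized maximum likelihood of the class of all Markov laws.
For any class of probability vectors, this code loses at most `log₂ S + 1` bits against every member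
of the class, where the Shtarkov sum `S` is the sum over all words of their maximum likelihood.

The probability of a path depends only on its first letter and on the multiset of its transitions.
Words sharing a value of such a statistic contribute at most `1` to `S`, so `S` is at most the
number of values, that is `k` times the number of multisets of `n - 1` transitions out of `k²`. A
binomial estimate bounds the latter by `2 ^ k² * (n / k² + 1) ^ (2 * k²)`.
-/

open Finset
open Matrix (rowStochastic)

section Coding

variable {ι : Type*} {p q : ι → ℝ}

/-- The code lengths `⌈log₂ (1 / q)⌉` of the Shannon code of `q`, meaningful only where `q` is
positive: at `q x = 0` the value is `0`. -/
noncomputable def shannonLength (q : ι → ℝ) (x : ι) : ℕ :=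
  ⌈Real.logb 2 (1 / q x)⌉₊

theorem two_zpow_neg_shannonLength_le {x : ι} (hx : 0 < q x) :
    (2 : ℝ) ^ (-(shannonLength q x : ℤ)) ≤ q x := by
  have hceil : Real.logb 2 (1 / q x) ≤ shannonLength q x := Nat.le_ceil _
  rw [zpow_neg, zpow_natCast, inv_le_comm₀ (by positivity) hx, ← one_div, ← Real.rpow_natCast]
  exact (Real.logb_le_iff_le_rpow one_lt_two (by positivity)).1 hceil

variable [Fintype ι]

/-- The excess, in bits, of the mean length of the code lengths `L` over the entropy of `p`: the
redundancy before it is divided by the number of letters. -/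
noncomputable def excessLength (p : ι → ℝ) (L : ι → ℕ) : ℝ :=
  ∑ x, p x * L x - ∑ x, p x * Real.logb 2 (1 / p x)

theorem gibbs_inequality {b : ℝ} (hb : 1 < b) (hp : p ∈ stdSimplex ℝ ι) (hq : ∀ x, 0 < q x)
    (hq_sum : ∑ x, q x ≤ 1) :
    ∑ x, p x * Real.logb b (1 / p x) ≤ ∑ x, p x * Real.logb b (1 / q x) := by
  have pointwise (x : ι) :
      p x * Real.logb b (1 / p x) - p x * Real.logb b (1 / q x) ≤ (q x - p x) / Real.log b := by
    rcases (hp.1 x).eq_or_lt with hx | hx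
    · simpa [← hx] using div_nonneg (hq x).le (Real.log_pos hb).le
    · have hlog := Real.log_le_sub_one_of_pos (div_pos (hq x) hx)
      rw [Real.log_div (hq x).ne' hx.ne'] at hlog
      calc p x * Real.logb b (1 / p x) - p x * Real.logb b (1 / q x)
          = p x * (Real.log (q x) - Real.log (p x)) / Real.log b := by
            simp only [one_div, Real.logb, Real.log_inv]
            ring
        _ ≤ p x * (q x / p x - 1) / Real.log b :=
            div_le_div_of_nonneg_right (mul_le_mul_of_nonneg_left hlog hx.le) (Real.log_pos hb).le
        _ = (q x - p x) / Real.log b := by field_simp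
  rw [← sub_nonpos, ← sum_sub_distrib]
  calc ∑ x, (p x * Real.logb b (1 / p x) - p x * Real.logb b (1 / q x))
      ≤ ∑ x, (q x - p x) / Real.log b := sum_le_sum fun x _ => pointwise x
    _ = (∑ x, q x - 1) / Real.log b := by rw [← sum_div, sum_sub_distrib, hp.2]
    _ ≤ 0 := div_nonpos_of_nonpos_of_nonneg (sub_nonpos.2 hq_sum) (Real.log_pos hb).le

theorem excessLength_nonneg (hp : p ∈ stdSimplex ℝ ι) {L : ι → ℕ}
    (hL : ∑ x, (2 : ℝ) ^ (-(L x : ℤ)) ≤ 1) : 0 ≤ excessLength p L := by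
  have h := gibbs_inequality one_lt_two hp (fun x => by positivity) hL
  have hlog (x : ι) : Real.logb 2 (1 / (2 : ℝ) ^ (-(L x : ℤ))) = L x := by
    rw [zpow_neg, one_div, inv_inv, zpow_natCast, Real.logb_pow, Real.logb_self_eq_one one_lt_two,
      mul_one]
  simpa only [hlog, excessLength, sub_nonneg] using h

theorem excessLength_shannonLength_le (hp : p ∈ stdSimplex ℝ ι) (hq : ∀ x, 0 < q x)
    (hq_le : ∀ x, q x ≤ 1) {C : ℝ} (hC : 0 < C) (hpq : ∀ x, p x ≤ C * q x) :
    excessLength p (shannonLength q) ≤ Real.logb 2 C + 1 := by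
  have pointwise (x : ι) : p x * shannonLength q x - p x * Real.logb 2 (1 / p x) ≤
      p x * (Real.logb 2 C + 1) := by
    rcases (hp.1 x).eq_or_lt with hx | hx
    · simp [← hx]
    have hceil : (shannonLength q x : ℝ) < Real.logb 2 (1 / q x) + 1 :=
      Nat.ceil_lt_add_one (Real.logb_nonneg one_lt_two (one_le_one_div (hq x) (hq_le x)))
    have hlog := Real.logb_le_logb_of_le one_lt_two hx (hpq x)
    rw [Real.logb_mul hC.ne' (hq x).ne'] at hlog
    rw [← mul_sub]
    refine mul_le_mul_of_nonneg_left ?_ hx.le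
    simp only [one_div, Real.logb_inv] at hceil ⊢
    linarith
  calc excessLength p (shannonLength q)
      = ∑ x, (p x * shannonLength q x - p x * Real.logb 2 (1 / p x)) := sum_sub_distrib ..|>.symm
    _ ≤ ∑ x, p x * (Real.logb 2 C + 1) := sum_le_sum fun x _ => pointwise x
    _ = Real.logb 2 C + 1 := by rw [← sum_mul, hp.2, one_mul]

end Coding

section Shtarkov

variable {ι Θ : Type*} [Fintype ι] {p : Θ → ι → ℝ}

/-- The Shtarkov sum of a class `p` of probability vectors: the total mass of the maximum
likelihood, which normalizes it to a probability vector. -/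
noncomputable def shtarkovSum (p : Θ → ι → ℝ) : ℝ :=
  ∑ x, ⨆ θ, p θ x

theorem le_iSup_likelihood (hp : ∀ θ, p θ ∈ stdSimplex ℝ ι) (θ : Θ) (x : ι) :
    p θ x ≤ ⨆ θ, p θ x :=
  le_ciSup (f := fun θ => p θ x)
    ⟨1, Set.forall_mem_range.2 fun θ => (mem_Icc_of_mem_stdSimplex (hp θ) x).2⟩ θ

theorem one_le_shtarkovSum [Nonempty Θ] (hp : ∀ θ, p θ ∈ stdSimplex ℝ ι) : 1 ≤ shtarkovSum p := by
  let θ : Θ := Classical.arbitrary Θ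
  exact (hp θ).2 ▸ sum_le_sum fun x _ => le_iSup_likelihood hp θ x

theorem exists_kraft_excessLength_le [Nonempty Θ] (hp : ∀ θ, p θ ∈ stdSimplex ℝ ι)
    (hpos : ∀ x, ∃ θ, 0 < p θ x) :
    ∃ L : ι → ℕ, ∑ x, (2 : ℝ) ^ (-(L x : ℤ)) ≤ 1 ∧
      ∀ θ, excessLength (p θ) L ≤ Real.logb 2 (shtarkovSum p) + 1 := by
  have hmax (x : ι) : 0 < ⨆ θ, p θ x :=
    (hpos x).elim fun θ hθ => hθ.trans_le (le_iSup_likelihood hp θ x)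
  have hmax_le (x : ι) : ⨆ θ, p θ x ≤ shtarkovSum p :=
    single_le_sum (f := fun x => ⨆ θ, p θ x) (fun y _ => (hmax y).le) (mem_univ x)
  have hS : 0 < shtarkovSum p := one_pos.trans_le (one_le_shtarkovSum hp)
  set q : ι → ℝ := fun x => (⨆ θ, p θ x) / shtarkovSum p
  have hq (x : ι) : 0 < q x := div_pos (hmax x) hS
  have hq_le (x : ι) : q x ≤ 1 := div_le_one_of_le₀ (hmax_le x) hS.le
  refine ⟨shannonLength q, ?_, fun θ => ?_⟩
  · calc ∑ x, (2 : ℝ) ^ (-(shannonLength q x : ℤ))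
        ≤ ∑ x, q x := sum_le_sum fun x _ => two_zpow_neg_shannonLength_le (hq x)
      _ = shtarkovSum p / shtarkovSum p := (sum_div ..).symm
      _ = 1 := div_self hS.ne'
  · refine excessLength_shannonLength_le (hp θ) hq hq_le hS fun x => ?_
    rw [mul_div_cancel₀ _ hS.ne']
    exact le_iSup_likelihood hp θ x

theorem shtarkovSum_le_card_of_factorsThrough {τ : Type*} [Fintype τ] {T : ι → τ}
    (hp : ∀ θ, p θ ∈ stdSimplex ℝ ι) (hT : ∀ θ, (p θ).FactorsThrough T) :
    shtarkovSum p ≤ Fintype.card τ := by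
  classical
  have fiber_le_one (t : τ) : ∑ x with T x = t, ⨆ θ, p θ x ≤ 1 := by
    obtain h | ⟨x₀, h₀⟩ := ({x | T x = t} : Finset ι).eq_empty_or_nonempty
    · simp [h]
    have hconst : ∀ θ, ∀ x ∈ ({x | T x = t} : Finset ι), p θ x = p θ x₀ := fun θ x hx =>
      hT θ ((mem_filter.1 hx).2.trans (mem_filter.1 h₀).2.symm)
    calc ∑ x with T x = t, ⨆ θ, p θ x
        = #{x | T x = t} * ⨆ θ, p θ x₀ := by
          rw [sum_congr rfl fun x hx => iSup_congr fun θ => hconst θ x hx, sum_const, nsmul_eq_mul]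
      _ = ⨆ θ, ∑ x with T x = t, p θ x := by
          rw [Real.mul_iSup_of_nonneg (Nat.cast_nonneg _)]
          exact iSup_congr fun θ => by rw [sum_congr rfl (hconst θ), sum_const, nsmul_eq_mul]
      _ ≤ 1 := Real.iSup_le (fun θ => (hp θ).2 ▸ sum_le_univ_sum_of_nonneg (hp θ).1) zero_le_one
  calc shtarkovSum p = ∑ t, ∑ x with T x = t, ⨆ θ, p θ x := (sum_fiberwise ..).symm
    _ ≤ ∑ _t : τ, 1 := sum_le_sum fun t _ => fiber_le_one t
    _ = Fintype.card τ := by simp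

end Shtarkov

section Counting

theorem choose_add_le_pow_mul_pow (d m : ℕ) {y : ℝ} (hy : 0 < y) :
    ((d + m).choose m : ℝ) ≤ (1 + y) ^ d * (1 + y⁻¹) ^ m := by
  have hterm : y ^ m * 1 ^ (d + m - m) * (d + m).choose m ≤ (y + 1) ^ (d + m) := by
    rw [add_pow]
    exact single_le_sum (f := fun i => y ^ i * 1 ^ (d + m - i) * ((d + m).choose i : ℝ))
      (fun i _ => by positivity) (mem_range.2 (by lia))
  rw [one_pow, mul_one, ← le_div_iff₀' (by positivity)] at hterm
  calc ((d + m).choose m : ℝ) ≤ (y + 1) ^ (d + m) / y ^ m := hterm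
    _ = (1 + y) ^ d * (1 + y⁻¹) ^ m := by
        rw [pow_add, mul_div_assoc, ← div_pow, add_div, div_self hy.ne', one_div, add_comm y]

theorem multichoose_pos {d : ℕ} (hd : 0 < d) (m : ℕ) : 0 < d.multichoose m := by
  rw [Nat.multichoose_eq]
  exact Nat.choose_pos (by lia)

theorem multichoose_le {d : ℕ} (hd : 0 < d) (m : ℕ) :
    (d.multichoose m : ℝ) ≤ 2 ^ d * ((m : ℝ) / d + 1) ^ (2 * d) := by
  -- The binomial estimate is used at `y = 1 + 2 * a`, for which `1 + y = 2 * (a + 1)`.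
  set a : ℝ := m / d with ha
  have ha0 : 0 ≤ a := by positivity
  have hm : (m : ℝ) = d * a := by rw [ha]; field_simp
  have hexponent : a * (1 + 2 * a)⁻¹ ≤ Real.log (a + 1) := by
    refine le_trans ?_ (Real.one_sub_inv_le_log_of_pos (by positivity))
    rw [← div_eq_mul_inv, div_le_iff₀ (by positivity)]
    field_simp
    nlinarith
  have hpow : (1 + (1 + 2 * a)⁻¹) ^ m ≤ (a + 1) ^ d := by
    calc (1 + (1 + 2 * a)⁻¹) ^ m
        ≤ Real.exp (1 + 2 * a)⁻¹ ^ m := by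
          gcongr
          rw [add_comm]
          exact Real.add_one_le_exp _
      _ = Real.exp (a * (1 + 2 * a)⁻¹) ^ d := by
          rw [← Real.exp_nat_mul, ← Real.exp_nat_mul, hm, mul_assoc]
      _ ≤ Real.exp (Real.log (a + 1)) ^ d := by gcongr
      _ = (a + 1) ^ d := by rw [Real.exp_log (by positivity)]
  calc (d.multichoose m : ℝ) ≤ (d + m).choose m := by
        rw [Nat.multichoose_eq]
        exact_mod_cast Nat.choose_le_choose m (Nat.sub_le _ 1)
    _ ≤ (1 + (1 + 2 * a)) ^ d * (1 + (1 + 2 * a)⁻¹) ^ m :=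
        choose_add_le_pow_mul_pow d m (by positivity)
    _ ≤ (1 + (1 + 2 * a)) ^ d * (a + 1) ^ d := by gcongr
    _ = 2 ^ d * (a + 1) ^ (2 * d) := by
        rw [pow_mul, ← mul_pow, ← mul_pow]
        congr 1
        ring

theorem logb_two_multichoose_le {d : ℕ} (hd : 0 < d) (m : ℕ) :
    Real.logb 2 (d.multichoose m) ≤ 2 * d * Real.logb 2 ((m : ℝ) / d + 1) + d := by
  calc Real.logb 2 (d.multichoose m)
      ≤ Real.logb 2 (2 ^ d * ((m : ℝ) / d + 1) ^ (2 * d)) :=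
        Real.logb_le_logb_of_le one_lt_two (Nat.cast_pos.2 (multichoose_pos hd m))
          (multichoose_le hd m)
    _ = 2 * d * Real.logb 2 ((m : ℝ) / d + 1) + d := by
        rw [Real.logb_mul (by positivity) (by positivity), Real.logb_pow, Real.logb_pow,
          Real.logb_self_eq_one one_lt_two, mul_one, add_comm]
        push_cast
        rfl

end Counting

section MarkovLaw

variable {α : Type*} {m : ℕ}

/-- The law of the first `m + 1` states of the Markov chain with transition matrix `K` and initial
law `π`. -/
def markovLaw (K : Matrix α α ℝ) (π : α → ℝ) (x : Fin (m + 1) → α) : ℝ :=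
  π (x 0) * ∏ i : Fin m, K (x i.castSucc) (x i.succ)

/-- The multiset of transitions of a path, also known as its Markov type. -/
def transitions (x : Fin (m + 1) → α) : Sym (α × α) m :=
  ⟨univ.val.map fun i : Fin m => (x i.castSucc, x i.succ), by simp⟩

theorem markovLaw_eq_prod_transitions (K : Matrix α α ℝ) (π : α → ℝ) (x : Fin (m + 1) → α) :
    markovLaw K π x =
      π (x 0) * ((transitions x : Multiset (α × α)).map fun ab => K ab.1 ab.2).prod := by
  simp only [markovLaw, transitions, Sym.coe_mk, Multiset.map_map]
  rfl

theorem markovLaw_factorsThrough (K : Matrix α α ℝ) (π : α → ℝ) :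
    (markovLaw K π : (Fin (m + 1) → α) → ℝ).FactorsThrough fun x => (x 0, transitions x) := by
  intro x y hxy
  obtain ⟨hfirst, htransitions⟩ := Prod.ext_iff.1 hxy
  simp only at hfirst htransitions
  rw [markovLaw_eq_prod_transitions, markovLaw_eq_prod_transitions, hfirst, htransitions]

theorem markovLaw_cons (K : Matrix α α ℝ) (π : α → ℝ) (a : α) (x : Fin (m + 1) → α) :
    markovLaw K π (Fin.cons a x : Fin (m + 2) → α) = markovLaw K (fun b => π a * K a b) x := by
  simp [markovLaw, Fin.prod_univ_succ, mul_assoc]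

variable [Fintype α] [DecidableEq α] {K : Matrix α α ℝ} {π : α → ℝ}

theorem sum_markovLaw (hK : K ∈ rowStochastic ℝ α) (π : α → ℝ) :
    ∑ x : Fin (m + 1) → α, markovLaw K π x = ∑ a, π a := by
  induction m generalizing π with
  | zero => exact Fintype.sum_equiv (Equiv.funUnique (Fin 1) α) _ _ fun x => by simp [markovLaw]
  | succ m ih =>
    calc ∑ x : Fin (m + 2) → α, markovLaw K π x
        = ∑ a, ∑ x : Fin (m + 1) → α, markovLaw K π (Fin.cons a x : Fin (m + 2) → α) := by
          rw [← (Fin.consEquiv fun _ => α).sum_comp, Fintype.sum_prod_type]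
          rfl
      _ = ∑ a, ∑ b, π a * K a b := by simp only [markovLaw_cons, ih]
      _ = ∑ a, π a := by simp only [← mul_sum, Matrix.sum_row_of_mem_rowStochastic hK, mul_one]

theorem markovLaw_mem_stdSimplex (hK : K ∈ rowStochastic ℝ α) (hπ : π ∈ stdSimplex ℝ α) :
    (markovLaw K π : (Fin (m + 1) → α) → ℝ) ∈ stdSimplex ℝ (Fin (m + 1) → α) :=
  ⟨fun _ => mul_nonneg (hπ.1 _) (prod_nonneg fun _ _ => Matrix.nonneg_of_mem_rowStochastic hK),
    (sum_markovLaw hK π).trans hπ.2⟩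

variable (α) in
theorem uniform_mem_rowStochastic [Nonempty α] :
    (Matrix.of fun _ _ => (Fintype.card α : ℝ)⁻¹) ∈ rowStochastic ℝ α :=
  Matrix.mem_rowStochastic_iff_sum.2 ⟨fun _ _ => by simp, fun _ => by simp⟩

variable (α m) in
theorem exists_kraft_excessLength_markovLaw_le [Nonempty α] :
    ∃ L : (Fin (m + 1) → α) → ℕ, ∑ x, (2 : ℝ) ^ (-(L x : ℤ)) ≤ 1 ∧
      ∀ K ∈ rowStochastic ℝ α, ∀ π ∈ stdSimplex ℝ α, excessLength (markovLaw K π) L ≤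
        Real.logb 2 (Fintype.card α) + Real.logb 2 ((Fintype.card α ^ 2).multichoose m) + 1 := by
  let law (θ : rowStochastic ℝ α × stdSimplex ℝ α) : (Fin (m + 1) → α) → ℝ :=
    markovLaw θ.1.1 θ.2.1
  have hlaw (θ) : law θ ∈ stdSimplex ℝ (Fin (m + 1) → α) :=
    markovLaw_mem_stdSimplex θ.1.2 θ.2.2
  let uniform : rowStochastic ℝ α × stdSimplex ℝ α :=
    (⟨_, uniform_mem_rowStochastic α⟩, stdSimplex.barycenter)
  have : Nonempty (rowStochastic ℝ α × stdSimplex ℝ α) := ⟨uniform⟩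
  have huniform (x) : 0 < law uniform x := by
    simp only [law, uniform, markovLaw, Matrix.of_apply, stdSimplex.barycenter_apply]
    positivity
  have hcard : shtarkovSum law ≤ Fintype.card α * (Fintype.card α ^ 2).multichoose m := by
    have h := shtarkovSum_le_card_of_factorsThrough hlaw fun θ =>
      markovLaw_factorsThrough θ.1.1 θ.2.1
    simpa [Sym.card_sym_eq_multichoose, sq] using h
  obtain ⟨L, hL, hexcess⟩ := exists_kraft_excessLength_le hlaw fun x => ⟨uniform, huniform x⟩
  refine ⟨L, hL, fun K hK π hπ => (hexcess (⟨K, hK⟩, ⟨π, hπ⟩)).trans ?_⟩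
  rw [← Real.logb_mul (Nat.cast_ne_zero.2 Fintype.card_ne_zero)
    (Nat.cast_ne_zero.2 (multichoose_pos (pow_pos Fintype.card_pos 2) m).ne')]
  gcongr
  · exact one_lt_two
  · exact one_pos.trans_le (one_le_shtarkovSum hlaw)

end MarkovLaw

section StationaryChain

variable {k n : ℕ} {K : Matrix (Fin k) (Fin k) ℝ} {π : Fin k → ℝ} {L : (Fin n → Fin k) → ℕ}

theorem isStochastic_iff_mem_rowStochastic : IsStochastic K ↔ K ∈ rowStochastic ℝ (Fin k) :=
  Matrix.mem_rowStochastic_iff_sum.symm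

theorem isProbVec_iff_mem_stdSimplex : IsProbVec π ↔ π ∈ stdSimplex ℝ (Fin k) :=
  Iff.rfl

theorem pathProb_succ (K : Matrix (Fin k) (Fin k) ℝ) (π : Fin k → ℝ) :
    (pathProb K π : (Fin (n + 1) → Fin k) → ℝ) = markovLaw K π := by
  funext x
  simp only [pathProb, dif_pos n.succ_pos]
  rfl

theorem redundancy_eq_excessLength_div (L : (Fin n → Fin k) → ℕ) (K : Matrix (Fin k) (Fin k) ℝ)
    (π : Fin k → ℝ) : redundancy L K π = excessLength (pathProb K π) L / n :=
  one_div_mul_eq_div _ _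

theorem pathProb_mem_stdSimplex (hK : IsStochastic K) (hπ : IsProbVec π) :
    (pathProb K π : (Fin n → Fin k) → ℝ) ∈ stdSimplex ℝ (Fin n → Fin k) := by
  cases n with
  | zero => exact ⟨fun _ => by simp [pathProb], by simp [pathProb]⟩
  | succ m =>
    rw [pathProb_succ]
    exact markovLaw_mem_stdSimplex (isStochastic_iff_mem_rowStochastic.1 hK)
      (isProbVec_iff_mem_stdSimplex.1 hπ)

theorem redundancy_nonneg (hL : Kraft L) (hK : IsStochastic K) (hπ : IsProbVec π) :
    0 ≤ redundancy L K π := by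
  rw [redundancy_eq_excessLength_div]
  exact div_nonneg (excessLength_nonneg (pathProb_mem_stdSimplex hK hπ) hL) n.cast_nonneg

theorem exists_memM2 (hk : 0 < k) :
    ∃ (K : Matrix (Fin k) (Fin k) ℝ) (π : Fin k → ℝ), MemM2 K π := by
  have : Nonempty (Fin k) := ⟨⟨0, hk⟩⟩
  exact ⟨_, _, isStochastic_iff_mem_rowStochastic.2 (uniform_mem_rowStochastic (Fin k)),
    isProbVec_iff_mem_stdSimplex.2 stdSimplex.barycenter.2, fun j => by simp [hk.ne']⟩

theorem minimaxRedundancyM2_le (hk : 0 < k) {r : ℝ}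
    (h : ∃ L : (Fin n → Fin k) → ℕ, Kraft L ∧ ∀ K π, MemM2 K π → redundancy L K π ≤ r) :
    minimaxRedundancyM2 k n ≤ r := by
  have hbdd : BddBelow {r : ℝ | ∃ L : (Fin n → Fin k) → ℕ, Kraft L ∧
      r = sSup {s : ℝ | ∃ K π, MemM2 K π ∧ s = redundancy L K π}} := by
    refine ⟨0, ?_⟩
    rintro _ ⟨L, hL, rfl⟩
    refine Real.sSup_nonneg ?_
    rintro _ ⟨K, π, hM, rfl⟩
    exact redundancy_nonneg hL hM.1 hM.2.1
  obtain ⟨L, hL, hr⟩ := h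
  obtain ⟨K₀, π₀, h₀⟩ := exists_memM2 hk
  refine (csInf_le hbdd ⟨L, hL, rfl⟩).trans (csSup_le ⟨_, K₀, π₀, h₀, rfl⟩ ?_)
  rintro _ ⟨K, π, hM, rfl⟩
  exact hr K π hM

end StationaryChain

theorem minimax_redundancy_upper_bound_general {k n : ℕ} (hk : 0 < k) (hn : 0 < n) :
    ∃ L : (Fin n → Fin k) → ℕ, Kraft L ∧
      ∀ K : Matrix (Fin k) (Fin k) ℝ, ∀ π : Fin k → ℝ, IsStochastic K → IsProbVec π →
        redundancy L K π ≤
          2 * (k : ℝ) ^ 2 / n * Real.logb 2 ((n : ℝ) / (k : ℝ) ^ 2 + 1)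
            + (k : ℝ) ^ 2 / n + (Real.logb 2 k + 1) / n := by
  obtain ⟨m, rfl⟩ : ∃ m, n = m + 1 := ⟨n - 1, by omega⟩
  have : Nonempty (Fin k) := ⟨⟨0, hk⟩⟩
  obtain ⟨L, hL, hexcess⟩ := exists_kraft_excessLength_markovLaw_le (Fin k) m
  refine ⟨L, hL, fun K π hK hπ => ?_⟩
  rw [redundancy_eq_excessLength_div, pathProb_succ, div_mul_eq_mul_div, ← add_div, ← add_div]
  gcongr
  calc excessLength (markovLaw K π) L
      ≤ Real.logb 2 k + Real.logb 2 ((k ^ 2).multichoose m) + 1 := by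
        simpa using hexcess K (isStochastic_iff_mem_rowStochastic.1 hK) π
          (isProbVec_iff_mem_stdSimplex.1 hπ)
    _ ≤ Real.logb 2 k + (2 * k ^ 2 * Real.logb 2 ((m : ℝ) / k ^ 2 + 1) + k ^ 2) + 1 := by
        gcongr
        exact_mod_cast logb_two_multichoose_le (pow_pos hk 2) m
    _ ≤ Real.logb 2 k + (2 * k ^ 2 * Real.logb 2 ((m + 1 : ℕ) / k ^ 2 + 1) + k ^ 2) + 1 := by
        gcongr
        · exact one_lt_two
        · exact m.le_succ
    _ = 2 * k ^ 2 * Real.logb 2 ((m + 1 : ℕ) / k ^ 2 + 1) + k ^ 2 + (Real.logb 2 k + 1) := by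
        ring

/-- **Theorem 2 (upper bound on the minimax redundancy for Markov chains).**
For all `k ≥ 2` and `n ≥ 2` there is a Kraft length function whose redundancy is at most
`(2k²/n)·log₂(n/k² + 1) + k²/n + (log₂ k + 3)/n` for every stationary Markov chain in
`M₂(k)`; consequently `R_n(k)` is at most this bound. -/
theorem minimax_redundancy_upper_bound (k n : ℕ) (hk : 2 ≤ k) (hn : 2 ≤ n) :
    (∃ L : (Fin n → Fin k) → ℕ, Kraft L ∧
      ∀ K : Matrix (Fin k) (Fin k) ℝ, ∀ π : Fin k → ℝ, MemM2 K π →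
        redundancy L K π ≤
          2 * (k : ℝ) ^ 2 / n * Real.logb 2 ((n : ℝ) / (k : ℝ) ^ 2 + 1)
            + (k : ℝ) ^ 2 / n + (Real.logb 2 k + 3) / n) ∧
    minimaxRedundancyM2 k n ≤
      2 * (k : ℝ) ^ 2 / n * Real.logb 2 ((n : ℝ) / (k : ℝ) ^ 2 + 1)
        + (k : ℝ) ^ 2 / n + (Real.logb 2 k + 3) / n := by
  refine (and_iff_left_of_imp (minimaxRedundancyM2_le (by omega))).2 ?_
  obtain ⟨L, hL, hred⟩ :=
    minimax_redundancy_upper_bound_general (k := k) (n := n) (by omega) (by omega)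
  exact ⟨L, hL, fun K π hM => (hred K π hM.1 hM.2.1).trans (by gcongr; norm_num)⟩

end Stmt1
end

section
/- Let k ≥ 2, n ≥ 2, and let q be a k×k row-stochastic matrix, interpreted as a conditional distribution q(b|a) = q_{ab} on [k]. Then there exists a length function L : [k]^n → ℕ satisfying Kraft's inequality Σ_{x^n ∈ [k]^n} 2^{−L(x^n)} ≤ 1 such that for every x^n ∈ [k]^n with q(x_{i+1}|x_i) > 0 for all 1 ≤ i ≤ n−1, L(x^n) ≤ ⌈log₂ k⌉ + Σ_{i=1}^{n−1} log₂( 1/q(x_{i+1}|x_i) ) + 2. In particular, taking q to be the empirical first-order conditional distribution q(b|a) = N(a,b)/N(a) of a sequence x^n, the resulting codelength satisfies L(x^n) ≤ log₂ k + (n−1)·H₁(x^n) + 3, where H₁(x^n) = Σ_{a,b} (N(a,b)/(n−1)) log₂( N(a)/N(a,b) ) is the first-order empirical entropy. -/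
/-!
Starting from a uniform symbol, the transition probabilities `q` give `[k]^n` the Markov weights
`P(x) = (1/k) ∏ q(x_{i+1} | x_i)`, of total mass at most `1`. Shannon lengths `⌈log₂ (1/P)⌉` are
undefined where `P` vanishes, so `P` is first mixed with the uniform distribution: the lengths
`⌈log₂ (1/R)⌉` for `R = (P + k^{-n})/2` satisfy Kraft's inequality on all of `[k]^n`, and `R ≥ P/2`
costs one extra bit, rounding another.

For the empirical conditional distribution of `x`, grouping the positions of `x` by the pair of
consecutive symbols found there turns the sum of `log₂ (1/q)` along `x` into `(n-1) H₁(x)`.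
-/

open scoped BigOperators

namespace Stmt13

/-- Kraft's inequality for a length function on `[k]^n`. -/
def Kraft {k n : ℕ} (L : (Fin n → Fin k) → ℕ) : Prop :=
  ∑ x : Fin n → Fin k, (2 : ℝ) ^ (-(L x : ℤ)) ≤ 1

/-- `N(a,b)`: the number of occurrences of the pair `(a,b)` among consecutive
entries of `x`. -/
def pairCount {k n : ℕ} (x : Fin n → Fin k) (a b : Fin k) : ℕ :=
  ∑ r : Fin (n - 1),
    if x ⟨r.1, by have := r.2; omega⟩ = a ∧ x ⟨r.1 + 1, by have := r.2; omega⟩ = b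
    then 1 else 0

/-- `N(a) = ∑_b N(a,b)`. -/
def count {k n : ℕ} (x : Fin n → Fin k) (a : Fin k) : ℕ :=
  ∑ b, pairCount x a b

/-- The first-order empirical entropy
`H₁(x^n) = ∑_{a,b} (N(a,b)/(n−1)) log₂(N(a)/N(a,b))` (terms with `N(a,b) = 0`
vanish). -/
noncomputable def empEntropy1 {k n : ℕ} (x : Fin n → Fin k) : ℝ :=
  ∑ a : Fin k, ∑ b : Fin k,
    ((pairCount x a b : ℝ) / ((n : ℝ) - 1)) *
      Real.logb 2 ((count x a : ℝ) / (pairCount x a b : ℝ))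

section ShannonCode

/-- The Shannon codelength `⌈log₂ (1/p)⌉` of an event of probability `p ∈ (0, 1]`. At `p = 0` the
value is `0`, since `Real.logb 2 0 = 0`. -/
noncomputable def shannonLength (p : ℝ) : ℕ :=
  ⌈-Real.logb 2 p⌉₊

lemma two_zpow_neg_shannonLength_le {p : ℝ} (hp : 0 < p) :
    (2 : ℝ) ^ (-(shannonLength p : ℤ)) ≤ p := by
  have hceil : -Real.logb 2 p ≤ shannonLength p := Nat.le_ceil _
  rw [← Real.rpow_intCast, ← Real.le_logb_iff_rpow_le one_lt_two hp]
  push_cast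
  linarith

lemma shannonLength_le_of_le {p r : ℝ} (hp : 0 < p) (hpr : p ≤ r) :
    shannonLength r ≤ shannonLength p :=
  Nat.ceil_mono (neg_le_neg (Real.logb_le_logb_of_le one_lt_two hp hpr))

lemma shannonLength_lt {p : ℝ} (hp₀ : 0 ≤ p) (hp₁ : p ≤ 1) :
    (shannonLength p : ℝ) < -Real.logb 2 p + 1 :=
  Nat.ceil_lt_add_one (neg_nonneg.2 (Real.logb_nonpos one_lt_two hp₀ hp₁))

lemma shannonLength_half_lt {p : ℝ} (hp₀ : 0 < p) (hp₁ : p ≤ 1) :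
    (shannonLength (p / 2) : ℝ) < -Real.logb 2 p + 2 := by
  have hlog : Real.logb 2 (p / 2) = Real.logb 2 p - 1 := by
    rw [Real.logb_div hp₀.ne' two_ne_zero, Real.logb_self_eq_one one_lt_two]
  have hlt := shannonLength_lt (p := p / 2) (by linarith) (by linarith)
  linarith

lemma sum_inv_card_le_one (ι : Type*) [Fintype ι] :
    ∑ _x : ι, (Fintype.card ι : ℝ)⁻¹ ≤ 1 := by
  simpa using mul_inv_le_one

lemma exists_kraft_length_le {ι : Type*} [Fintype ι] {p : ι → ℝ} (hp : ∀ x, 0 ≤ p x)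
    (hsum : ∑ x, p x ≤ 1) :
    ∃ L : ι → ℕ, ∑ x, (2 : ℝ) ^ (-(L x : ℤ)) ≤ 1 ∧
      ∀ x, 0 < p x → (L x : ℝ) ≤ -Real.logb 2 (p x) + 2 := by
  let r : ι → ℝ := fun x => (p x + (Fintype.card ι : ℝ)⁻¹) / 2
  have hr_pos (x : ι) : 0 < r x := by
    have hcard : 0 < Fintype.card ι := Fintype.card_pos_iff.2 ⟨x⟩
    have := hp x
    positivity
  have half_le_r (x : ι) : p x / 2 ≤ r x :=
    div_le_div_of_nonneg_right (le_add_of_nonneg_right (by positivity)) zero_le_two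
  refine ⟨fun x => shannonLength (r x), ?_, fun x hx => ?_⟩
  · calc ∑ x, (2 : ℝ) ^ (-(shannonLength (r x) : ℤ))
        ≤ ∑ x, r x := Finset.sum_le_sum fun x _ => two_zpow_neg_shannonLength_le (hr_pos x)
      _ = (∑ x, p x + ∑ _x : ι, (Fintype.card ι : ℝ)⁻¹) / 2 := by
        rw [← Finset.sum_add_distrib, Finset.sum_div]
      _ ≤ 1 := by linarith [sum_inv_card_le_one ι]
  · have hp_le_one : p x ≤ 1 :=
      (Finset.single_le_sum (fun y _ => hp y) (Finset.mem_univ x)).trans hsum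
    calc (shannonLength (r x) : ℝ)
        ≤ shannonLength (p x / 2) := mod_cast shannonLength_le_of_le (half_pos hx) (half_le_r x)
      _ ≤ -Real.logb 2 (p x) + 2 := (shannonLength_half_lt hx hp_le_one).le

end ShannonCode

section MarkovWeight

variable {α : Type*} {m : ℕ} {μ : α → ℝ} {q : Matrix α α ℝ}

/-- The weight `μ(x₀) ∏ q(x_{i+1} | x_i)` of a path with `m` steps: its probability under the
Markov chain with initial distribution `μ` and transition matrix `q`. -/
def markovWeight (μ : α → ℝ) (q : Matrix α α ℝ) (x : Fin (m + 1) → α) : ℝ :=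
  μ (x 0) * ∏ i : Fin m, q (x i.castSucc) (x i.succ)

lemma markovWeight_nonneg (hμ : ∀ a, 0 ≤ μ a) (hq : ∀ a b, 0 ≤ q a b) (x : Fin (m + 1) → α) :
    0 ≤ markovWeight μ q x :=
  mul_nonneg (hμ _) (Finset.prod_nonneg fun _ _ => hq _ _)

lemma markovWeight_snoc (μ : α → ℝ) (q : Matrix α α ℝ) (x : Fin (m + 1) → α) (b : α) :
    markovWeight μ q (Fin.snoc x b : Fin (m + 2) → α) =
      markovWeight μ q x * q (x (Fin.last m)) b := by
  have hzero : (Fin.snoc x b : Fin (m + 2) → α) 0 = x 0 := Fin.snoc_castSucc (α := fun _ => α) b x 0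
  simp only [markovWeight, Fin.prod_univ_castSucc, hzero, Fin.snoc_castSucc, Fin.succ_last,
    Fin.snoc_last, Fin.succ_castSucc, mul_assoc]

lemma logb_markovWeight (c : ℝ) {x : Fin (m + 1) → α} (hμ : μ (x 0) ≠ 0)
    (hq : ∀ i : Fin m, q (x i.castSucc) (x i.succ) ≠ 0) :
    Real.logb c (markovWeight μ q x) =
      Real.logb c (μ (x 0)) + ∑ i : Fin m, Real.logb c (q (x i.castSucc) (x i.succ)) := by
  rw [markovWeight, Real.logb_mul hμ (Finset.prod_ne_zero_iff.2 fun i _ => hq i),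
    Real.logb_prod _ _ fun i _ => hq i]

variable [Fintype α]

lemma sum_markovWeight_le (hμ : ∀ a, 0 ≤ μ a) (hq : ∀ a b, 0 ≤ q a b)
    (hrow : ∀ a, ∑ b, q a b ≤ 1) (m : ℕ) :
    ∑ x : Fin (m + 1) → α, markovWeight μ q x ≤ ∑ a, μ a := by
  induction m with
  | zero =>
    rw [← (Equiv.funUnique (Fin 1) α).sum_comp]
    simp [markovWeight]
  | succ m ih =>
    calc ∑ x : Fin (m + 2) → α, markovWeight μ q x
        = ∑ x : Fin (m + 1) → α, ∑ b, markovWeight μ q (Fin.snoc x b : Fin (m + 2) → α) := by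
          rw [← (Fin.snocEquiv fun _ : Fin (m + 2) => α).sum_comp, Fintype.sum_prod_type_right]
          rfl
      _ = ∑ x : Fin (m + 1) → α, markovWeight μ q x * ∑ b, q (x (Fin.last m)) b := by
          simp only [markovWeight_snoc, Finset.mul_sum]
      _ ≤ ∑ x : Fin (m + 1) → α, markovWeight μ q x :=
          Finset.sum_le_sum fun x _ =>
            mul_le_of_le_one_right (markovWeight_nonneg hμ hq x) (hrow _)
      _ ≤ ∑ a, μ a := ih

lemma exists_kraft_length_le_markov (hμ : ∀ a, 0 ≤ μ a) (hμ_sum : ∑ a, μ a ≤ 1)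
    (hq : ∀ a b, 0 ≤ q a b) (hrow : ∀ a, ∑ b, q a b ≤ 1) (m : ℕ) :
    ∃ L : (Fin (m + 1) → α) → ℕ, ∑ x, (2 : ℝ) ^ (-(L x : ℤ)) ≤ 1 ∧
      ∀ x, 0 < μ (x 0) → (∀ i : Fin m, 0 < q (x i.castSucc) (x i.succ)) →
        (L x : ℝ) ≤ Real.logb 2 (1 / μ (x 0)) +
          ∑ i : Fin m, Real.logb 2 (1 / q (x i.castSucc) (x i.succ)) + 2 := by
  obtain ⟨L, hkraft, hL⟩ := exists_kraft_length_le (markovWeight_nonneg hμ hq)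
    ((sum_markovWeight_le hμ hq hrow m).trans hμ_sum)
  refine ⟨L, hkraft, fun x hx₀ hx => ?_⟩
  have hbound := hL x (mul_pos hx₀ (Finset.prod_pos fun i _ => hx i))
  rw [logb_markovWeight 2 hx₀.ne' fun i => (hx i).ne'] at hbound
  simp only [one_div, Real.logb_inv, Finset.sum_neg_distrib]
  linarith

lemma exists_kraft_length_le_markov_uniform (hq : ∀ a b, 0 ≤ q a b)
    (hrow : ∀ a, ∑ b, q a b ≤ 1) (m : ℕ) :
    ∃ L : (Fin (m + 1) → α) → ℕ, ∑ x, (2 : ℝ) ^ (-(L x : ℤ)) ≤ 1 ∧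
      ∀ x, (∀ i : Fin m, 0 < q (x i.castSucc) (x i.succ)) →
        (L x : ℝ) ≤ Real.logb 2 (Fintype.card α) +
          ∑ i : Fin m, Real.logb 2 (1 / q (x i.castSucc) (x i.succ)) + 2 := by
  obtain ⟨L, hkraft, hL⟩ := exists_kraft_length_le_markov
    (μ := fun _ => (Fintype.card α : ℝ)⁻¹) (fun _ => by positivity) (sum_inv_card_le_one α)
    hq hrow m
  refine ⟨L, hkraft, fun x hx => ?_⟩
  have hcard : 0 < Fintype.card α := Fintype.card_pos_iff.2 ⟨x 0⟩
  simpa using hL x (by positivity) hx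

end MarkovWeight

section Empirical

variable {k m n : ℕ}

lemma pairCount_eq_card (x : Fin (m + 1) → Fin k) (a b : Fin k) :
    pairCount x a b = Finset.card {i : Fin m | x i.castSucc = a ∧ x i.succ = b} :=
  (Finset.card_filter _ _).symm

lemma pairCount_pos (x : Fin (m + 1) → Fin k) (i : Fin m) :
    0 < pairCount x (x i.castSucc) (x i.succ) := by
  rw [pairCount_eq_card]
  exact Finset.card_pos.2 ⟨i, by simp⟩

lemma pairCount_le_count (x : Fin n → Fin k) (a b : Fin k) : pairCount x a b ≤ count x a :=
  Finset.single_le_sum (fun _ _ => Nat.zero_le _) (Finset.mem_univ b)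

lemma sum_consecutive_eq_sum_pairCount_nsmul {M : Type*} [AddCommMonoid M]
    (x : Fin (m + 1) → Fin k) (f : Fin k → Fin k → M) :
    ∑ i : Fin m, f (x i.castSucc) (x i.succ) = ∑ a, ∑ b, pairCount x a b • f a b := by
  rw [← Finset.sum_fiberwise' Finset.univ (fun i : Fin m => (x i.castSucc, x i.succ))
    fun ab => f ab.1 ab.2, Fintype.sum_prod_type]
  simp only [Finset.sum_const, Prod.mk.injEq, pairCount_eq_card]

/-- The empirical conditional distribution `q(b|a) = N(a,b)/N(a)` of `x`. The row of a symbol with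
`N(a) = 0` is zero, so the matrix is only substochastic. -/
noncomputable def empCond (x : Fin n → Fin k) : Matrix (Fin k) (Fin k) ℝ :=
  fun a b => (pairCount x a b : ℝ) / count x a

lemma empCond_nonneg (x : Fin n → Fin k) (a b : Fin k) : 0 ≤ empCond x a b := by
  unfold empCond
  positivity

lemma sum_empCond_le_one (x : Fin n → Fin k) (a : Fin k) : ∑ b, empCond x a b ≤ 1 := by
  have hcount : ∑ b, (pairCount x a b : ℝ) = count x a := by simp [count]
  simpa only [empCond, ← Finset.sum_div, hcount] using div_self_le_one _

lemma empCond_consecutive_pos (x : Fin (m + 1) → Fin k) (i : Fin m) :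
    0 < empCond x (x i.castSucc) (x i.succ) := by
  have hpair := pairCount_pos x i
  have hcount := hpair.trans_le (pairCount_le_count x _ _)
  unfold empCond
  positivity

lemma sum_logb_empCond_eq_mul_empEntropy1 (hm : m ≠ 0) (x : Fin (m + 1) → Fin k) :
    ∑ i : Fin m, Real.logb 2 (1 / empCond x (x i.castSucc) (x i.succ)) = m * empEntropy1 x := by
  have hm' : (m : ℝ) ≠ 0 := mod_cast hm
  rw [sum_consecutive_eq_sum_pairCount_nsmul x fun a b => Real.logb 2 (1 / empCond x a b)]
  simp only [empEntropy1, empCond, one_div_div, nsmul_eq_mul, Finset.mul_sum, Nat.cast_add,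
    Nat.cast_one, add_sub_cancel_right, ← mul_assoc, mul_div_cancel₀ _ hm']

end Empirical

/-- **First-order arithmetic coding.**  (i) For every row-stochastic conditional
distribution `q` on `[k]` there is a Kraft length function `L` with
`L(x^n) ≤ ⌈log₂ k⌉ + ∑_{i<n} log₂(1/q(x_{i+1}|x_i)) + 2` whenever all the transition
probabilities along `x^n` are positive.  (ii) In particular (taking `q` to be the
empirical first-order conditional distribution of `x^n`), for every `x^n` there is a
Kraft length function with `L(x^n) ≤ log₂ k + (n−1) H₁(x^n) + 3`. -/
theorem arithmetic_coding (k n : ℕ) (hk : 2 ≤ k) (hn : 2 ≤ n) :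
    (∀ q : Matrix (Fin k) (Fin k) ℝ, (∀ a b, 0 ≤ q a b) → (∀ a, ∑ b, q a b = 1) →
      ∃ L : (Fin n → Fin k) → ℕ, Kraft L ∧
        ∀ x : Fin n → Fin k,
          (∀ i : Fin (n - 1),
            0 < q (x ⟨i.1, by have := i.2; omega⟩) (x ⟨i.1 + 1, by have := i.2; omega⟩)) →
          (L x : ℝ) ≤ (⌈Real.logb 2 (k : ℝ)⌉ : ℝ) +
            (∑ i : Fin (n - 1), Real.logb 2
              (1 / q (x ⟨i.1, by have := i.2; omega⟩) (x ⟨i.1 + 1, by have := i.2; omega⟩)))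
            + 2) ∧
    (∀ x : Fin n → Fin k, ∃ L : (Fin n → Fin k) → ℕ, Kraft L ∧
      (L x : ℝ) ≤ Real.logb 2 (k : ℝ) + ((n : ℝ) - 1) * empEntropy1 x + 3) := by
  obtain ⟨m, rfl⟩ : ∃ m, n = m + 1 := ⟨n - 1, by omega⟩
  constructor
  · intro q hq hrow
    obtain ⟨L, hkraft, hL⟩ := exists_kraft_length_le_markov_uniform hq (fun a => (hrow a).le) m
    refine ⟨L, hkraft, fun x hx => (hL x hx).trans ?_⟩
    rw [Fintype.card_fin]
    exact add_le_add (add_le_add (Int.le_ceil _) le_rfl) le_rfl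
  · intro x
    obtain ⟨L, hkraft, hL⟩ :=
      exists_kraft_length_le_markov_uniform (empCond_nonneg x) (sum_empCond_le_one x) m
    have hbound := hL x (empCond_consecutive_pos x)
    rw [sum_logb_empCond_eq_mul_empEntropy1 (by omega) x, Fintype.card_fin] at hbound
    refine ⟨L, hkraft, ?_⟩
    push_cast
    linarith

end Stmt13
end

section
/- For all k ≥ 2 and n ≥ 2 there exists a single length function L̂ : [k]^n → ℕ satisfying Kraft's inequality Σ_{x^n ∈ [k]^n} 2^{−L̂(x^n)} ≤ 1 such that for every sequence x^n ∈ [k]^n, L̂(x^n) ≤ 2k²·log₂(n/k² + 1) + k² + log₂ k + (n−1)·H₁(x^n) + 3, where H₁(x^n) = Σ_{a,b ∈ [k]} (N(a,b)/(n−1))·log₂( N(a)/N(a,b) ) is the first-order empirical entropy of x^n. -/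
/-!
A sequence `x` is given the weight `w(N) · P_N(x)`, where `N` is its matrix of pair counts, `w` is
the product over the entries `m` of `N` of the telescoping weights `1 / ((m + 1)(m + 2))`, and
`P_C` is the law of the Markov chain that starts uniformly and moves according to the normalised
rows of `C`. These weights add up to at most `1`, because `(C, x) ↦ w(C) · P_C(x)` is a
subprobability on pairs and `x ↦ (N, x)` is injective; rounding `-log₂` of the weight up gives
Kraft lengths. The uniform start costs `log₂ k` bits and the transitions cost exactly
`(n - 1) H₁(x)`. An entry `m` of `N` costs at most `2 log₂ (m + 1) + 1` and the `k²` entries add up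
to `n - 1`, so by Jensen's inequality `N` costs at most `2k² log₂ ((n - 1)/k² + 1) + k²`.
-/

open scoped BigOperators

namespace Stmt14

/-- Kraft's inequality for a length function on `[k]^n`. -/
def Kraft {k n : ℕ} (L : (Fin n → Fin k) → ℕ) : Prop :=
  ∑ x : Fin n → Fin k, (2 : ℝ) ^ (-(L x : ℤ)) ≤ 1

/-- `N(a,b)`: the number of occurrences of the pair `(a,b)` among consecutive
entries of `x`. -/
def pairCount {k n : ℕ} (x : Fin n → Fin k) (a b : Fin k) : ℕ :=
  ∑ r : Fin (n - 1),
    if x ⟨r.1, by have := r.2; omega⟩ = a ∧ x ⟨r.1 + 1, by have := r.2; omega⟩ = b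
    then 1 else 0

/-- `N(a) = ∑_b N(a,b)`. -/
def count {k n : ℕ} (x : Fin n → Fin k) (a : Fin k) : ℕ :=
  ∑ b, pairCount x a b

/-- The first-order empirical entropy
`H₁(x^n) = ∑_{a,b} (N(a,b)/(n−1)) log₂(N(a)/N(a,b))` (terms with `N(a,b) = 0`
vanish). -/
noncomputable def empEntropy1 {k n : ℕ} (x : Fin n → Fin k) : ℝ :=
  ∑ a : Fin k, ∑ b : Fin k,
    ((pairCount x a b : ℝ) / ((n : ℝ) - 1)) *
      Real.logb 2 ((count x a : ℝ) / (pairCount x a b : ℝ))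

/-- A family of nonnegative weights all of whose finite partial sums are at most `1`. Stating this
with finite sums covers infinite index types without any summability side conditions. -/
structure IsSubprobability {α : Type*} (p : α → ℝ) : Prop where
  nonneg (a : α) : 0 ≤ p a
  sum_le_one (s : Finset α) : ∑ a ∈ s, p a ≤ 1

namespace IsSubprobability

variable {α β : Type*} {p : α → ℝ}

lemma le_one (hp : IsSubprobability p) (a : α) : p a ≤ 1 := by
  simpa using hp.sum_le_one {a}

lemma comp_injective (hp : IsSubprobability p) {f : β → α} (hf : Function.Injective f) :
    IsSubprobability fun b => p (f b) where
  nonneg b := hp.nonneg (f b)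
  sum_le_one s := by simpa using hp.sum_le_one (s.map ⟨f, hf⟩)

lemma compProd (hp : IsSubprobability p) {κ : α → β → ℝ} (hκ : ∀ a, IsSubprobability (κ a)) :
    IsSubprobability fun q : α × β => p q.1 * κ q.1 q.2 where
  nonneg q := mul_nonneg (hp.nonneg q.1) ((hκ q.1).nonneg q.2)
  sum_le_one s := by
    classical
    calc ∑ q ∈ s, p q.1 * κ q.1 q.2
        ≤ ∑ q ∈ s.image Prod.fst ×ˢ s.image Prod.snd, p q.1 * κ q.1 q.2 :=
          Finset.sum_le_sum_of_subset_of_nonneg Finset.subset_product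
            fun q _ _ => mul_nonneg (hp.nonneg q.1) ((hκ q.1).nonneg q.2)
      _ = ∑ a ∈ s.image Prod.fst, p a * ∑ b ∈ s.image Prod.snd, κ a b := by
          simp only [Finset.sum_product, Finset.mul_sum]
      _ ≤ ∑ a ∈ s.image Prod.fst, p a :=
          Finset.sum_le_sum fun a _ =>
            mul_le_of_le_one_right (hp.nonneg a) ((hκ a).sum_le_one _)
      _ ≤ 1 := hp.sum_le_one _

lemma twoPart (hp : IsSubprobability p) {κ : α → β → ℝ} (hκ : ∀ a, IsSubprobability (κ a))
    (param : β → α) : IsSubprobability fun b => p (param b) * κ (param b) b :=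
  (hp.compProd hκ).comp_injective (f := fun b => (param b, b)) fun _ _ h => congrArg Prod.snd h

lemma pi {ι : Type*} [Fintype ι] (hp : IsSubprobability p) :
    IsSubprobability fun f : ι → α => ∏ i, p (f i) where
  nonneg f := Finset.prod_nonneg fun i _ => hp.nonneg (f i)
  sum_le_one s := by
    classical
    let values (i : ι) : Finset α := s.image fun f => f i
    have hs : s ⊆ Fintype.piFinset values := fun f hf =>
      Fintype.mem_piFinset.mpr fun i => Finset.mem_image_of_mem (fun f => f i) hf
    calc ∑ f ∈ s, ∏ i, p (f i)
        ≤ ∑ f ∈ Fintype.piFinset values, ∏ i, p (f i) :=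
          Finset.sum_le_sum_of_subset_of_nonneg hs
            fun f _ _ => Finset.prod_nonneg fun i _ => hp.nonneg (f i)
      _ = ∏ i, ∑ a ∈ values i, p a := by rw [Finset.prod_univ_sum]
      _ ≤ 1 := Finset.prod_le_one (fun _ _ => Finset.sum_nonneg fun a _ => hp.nonneg a)
          fun i _ => hp.sum_le_one (values i)

lemma exists_kraft_length (hp : IsSubprobability p) (hpos : ∀ a, 0 < p a) :
    ∃ L : α → ℕ, IsSubprobability (fun a => (2 : ℝ) ^ (-(L a : ℤ))) ∧
      ∀ a, (L a : ℝ) ≤ -Real.logb 2 (p a) + 1 := by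
  refine ⟨fun a => ⌈-Real.logb 2 (p a)⌉₊, ⟨fun a => by positivity, fun s => ?_⟩, fun a => ?_⟩
  · refine (Finset.sum_le_sum fun a _ => ?_).trans (hp.sum_le_one s)
    calc (2 : ℝ) ^ (-(⌈-Real.logb 2 (p a)⌉₊ : ℤ))
        = (2 : ℝ) ^ (-(⌈-Real.logb 2 (p a)⌉₊ : ℝ)) := by
          rw [← Real.rpow_intCast]
          push_cast
          rfl
      _ ≤ (2 : ℝ) ^ Real.logb 2 (p a) :=
          Real.rpow_le_rpow_of_exponent_le one_le_two (neg_le.mp (Nat.le_ceil _))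
      _ = p a := Real.rpow_logb two_pos (by norm_num) (hpos a)
  · have hlog : Real.logb 2 (p a) ≤ 0 :=
      Real.logb_nonpos one_lt_two (hp.nonneg a) (hp.le_one a)
    exact (Nat.ceil_lt_add_one (neg_nonneg.mpr hlog)).le

end IsSubprobability

lemma isSubprobability_uniform (α : Type*) [Fintype α] :
    IsSubprobability fun _ : α => (Fintype.card α : ℝ)⁻¹ where
  nonneg _ := by positivity
  sum_le_one s := by
    rw [Finset.sum_const, nsmul_eq_mul, ← div_eq_mul_inv]
    exact div_le_one_of_le₀ (by exact_mod_cast s.card_le_univ) (by positivity)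

section RelFreq

variable {α : Type*} [Fintype α] (c : α → ℕ)

/-- The empirical distribution of a family of counts. It is identically `0` when all counts are
`0`, since then `0 / 0 = 0`. -/
noncomputable def relFreq (a : α) : ℝ :=
  (c a : ℝ) / (∑ b, c b : ℕ)

lemma isSubprobability_relFreq : IsSubprobability (relFreq c) where
  nonneg _ := by unfold relFreq; positivity
  sum_le_one s := by
    unfold relFreq
    rw [← Finset.sum_div]
    refine div_le_one_of_le₀ ?_ (by positivity)
    exact_mod_cast Finset.sum_le_sum_of_subset s.subset_univ

lemma relFreq_pos {a : α} (ha : 0 < c a) : 0 < relFreq c a := by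
  have hsum : 0 < ∑ b, c b := ha.trans_le (Finset.single_le_sum_of_canonicallyOrdered (by simp))
  unfold relFreq
  positivity

end RelFreq

section MarkovWeight

variable {α : Type*} {μ : α → ℝ} {W : α → α → ℝ} {m : ℕ}

/-- The weight of the path `x` under the Markov chain with initial weights `μ` and transition
weights `W`. -/
def markovWeight (μ : α → ℝ) (W : α → α → ℝ) (x : Fin (m + 1) → α) : ℝ :=
  μ (x 0) * ∏ r : Fin m, W (x r.castSucc) (x r.succ)

lemma markovWeight_eq_init_mul (x : Fin (m + 2) → α) :
    markovWeight μ W x =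
      markovWeight μ W (Fin.init x) * W (Fin.init x (Fin.last m)) (x (Fin.last (m + 1))) := by
  simp only [markovWeight, Fin.prod_univ_castSucc, Fin.init, Fin.succ_castSucc, Fin.succ_last,
    Fin.castSucc_zero, mul_assoc]

lemma isSubprobability_markovWeight (hμ : IsSubprobability μ)
    (hW : ∀ a, IsSubprobability (W a)) (m : ℕ) :
    IsSubprobability fun x : Fin (m + 1) → α => markovWeight μ W x := by
  induction m with
  | zero =>
    simpa [markovWeight] using hμ.comp_injective (Equiv.funUnique (Fin 1) α).injective
  | succ m ih =>
    have hinj : Function.Injective fun x : Fin (m + 2) → α =>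
        (Fin.init x, x (Fin.last (m + 1))) := fun x y h => by
      obtain ⟨hinit, hlast⟩ := Prod.mk.inj h
      rw [← Fin.snoc_init_self x, ← Fin.snoc_init_self y, hinit, hlast]
    simpa only [markovWeight_eq_init_mul] using
      (ih.compProd fun y => hW (y (Fin.last m))).comp_injective hinj

end MarkovWeight

lemma sum_logb_le_card_mul_logb {ι : Type*} [Fintype ι] [Nonempty ι] {b : ℝ} (hb : 1 < b)
    {f : ι → ℝ} (hf : ∀ i, 0 < f i) :
    ∑ i, Real.logb b (f i) ≤
      Fintype.card ι * Real.logb b ((∑ i, f i) / Fintype.card ι) := by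
  have hcard : (0 : ℝ) < Fintype.card ι := by exact_mod_cast Fintype.card_pos
  have hlog : 0 < Real.log b := Real.log_pos hb
  have jensen := strictConcaveOn_log_Ioi.concaveOn.le_map_sum (t := Finset.univ)
    (w := fun _ : ι => (Fintype.card ι : ℝ)⁻¹) (p := f) (fun _ _ => by positivity)
    (by simp [hcard.ne']) (fun i _ => hf i)
  simp only [smul_eq_mul, ← Finset.mul_sum] at jensen
  rw [inv_mul_le_iff₀ hcard, ← div_eq_inv_mul] at jensen
  simp only [Real.logb, ← Finset.sum_div, ← mul_div_assoc]
  gcongr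

section IntWeight

/-- The weight `1 / ((m + 1)(m + 2))` of the natural number `m`, used as a universal code for the
integers: the sum over all `m` telescopes to `1`. -/
noncomputable def intWeight (m : ℕ) : ℝ :=
  1 / (((m : ℝ) + 1) * ((m : ℝ) + 2))

lemma intWeight_pos (m : ℕ) : 0 < intWeight m := by
  unfold intWeight
  positivity

lemma sum_range_intWeight (n : ℕ) :
    ∑ m ∈ Finset.range n, intWeight m = 1 - 1 / ((n : ℝ) + 1) := by
  induction n with
  | zero => simp
  | succ n ih =>
    rw [Finset.sum_range_succ, ih]
    unfold intWeight
    push_cast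
    field_simp
    ring

lemma isSubprobability_intWeight : IsSubprobability intWeight where
  nonneg m := (intWeight_pos m).le
  sum_le_one s := by
    obtain ⟨n, hn⟩ := s.exists_nat_subset_range
    calc ∑ m ∈ s, intWeight m
        ≤ ∑ m ∈ Finset.range n, intWeight m :=
          Finset.sum_le_sum_of_subset_of_nonneg hn fun m _ _ => (intWeight_pos m).le
      _ = 1 - 1 / ((n : ℝ) + 1) := sum_range_intWeight n
      _ ≤ 1 := sub_le_self _ (by positivity)

lemma neg_logb_intWeight_le (m : ℕ) :
    -Real.logb 2 (intWeight m) ≤ 2 * Real.logb 2 ((m : ℝ) + 1) + 1 := by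
  calc -Real.logb 2 (intWeight m)
      = Real.logb 2 (((m : ℝ) + 1) * ((m : ℝ) + 2)) := by
        rw [intWeight, one_div, Real.logb_inv, neg_neg]
    _ ≤ Real.logb 2 (((m : ℝ) + 1) ^ 2 * 2) :=
        Real.logb_le_logb_of_le one_lt_two (by positivity)
          (by nlinarith [m.cast_nonneg (α := ℝ)])
    _ = 2 * Real.logb 2 ((m : ℝ) + 1) + 1 := by
        rw [Real.logb_mul (by positivity) two_ne_zero, Real.logb_pow,
          Real.logb_self_eq_one one_lt_two]
        norm_num

lemma sum_neg_logb_intWeight_le {ι : Type*} [Fintype ι] [Nonempty ι] (f : ι → ℕ) :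
    ∑ i, -Real.logb 2 (intWeight (f i)) ≤
      2 * Fintype.card ι * Real.logb 2 ((∑ i, f i : ℕ) / Fintype.card ι + 1)
        + Fintype.card ι := by
  have hmean : (∑ i, ((f i : ℝ) + 1)) / Fintype.card ι =
      (∑ i, f i : ℕ) / Fintype.card ι + 1 := by
    simp [Finset.sum_add_distrib, add_div]
  calc ∑ i, -Real.logb 2 (intWeight (f i))
      ≤ ∑ i, (2 * Real.logb 2 ((f i : ℝ) + 1) + 1) :=
        Finset.sum_le_sum fun i _ => neg_logb_intWeight_le (f i)
    _ = 2 * ∑ i, Real.logb 2 ((f i : ℝ) + 1) + Fintype.card ι := by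
        simp [Finset.sum_add_distrib, Finset.mul_sum]
    _ ≤ 2 * (Fintype.card ι * Real.logb 2 ((∑ i, ((f i : ℝ) + 1)) / Fintype.card ι))
          + Fintype.card ι := by
        gcongr
        exact sum_logb_le_card_mul_logb one_lt_two fun i => by positivity
    _ = _ := by rw [hmean, mul_assoc]

end IntWeight

section PairCount

variable {k m : ℕ} (x : Fin (m + 1) → Fin k)

lemma sum_consecutive_eq_sum_pairCount_nsmul {M : Type*} [AddCommMonoid M]
    (g : Fin k → Fin k → M) :
    ∑ r : Fin m, g (x r.castSucc) (x r.succ) = ∑ a, ∑ b, pairCount x a b • g a b := by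
  have hcount (a b : Fin k) : pairCount x a b =
      ∑ r : Fin m, if x r.castSucc = a ∧ x r.succ = b then 1 else 0 := rfl
  simp only [hcount, Finset.sum_smul]
  rw [Finset.sum_congr rfl fun a _ => Finset.sum_comm, Finset.sum_comm]
  simp [ite_and, ite_smul]

lemma sum_pairCount : ∑ a, ∑ b, pairCount x a b = m := by
  simpa using (sum_consecutive_eq_sum_pairCount_nsmul x fun _ _ => (1 : ℕ)).symm

lemma pairCount_consecutive_pos (r : Fin m) : 0 < pairCount x (x r.castSucc) (x r.succ) :=
  Finset.sum_pos' (fun _ _ => Nat.zero_le _) ⟨r, Finset.mem_univ r, by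
    rw [if_pos ⟨rfl, rfl⟩]
    exact one_pos⟩

lemma sum_neg_logb_relFreq_pairCount :
    ∑ r : Fin m, -Real.logb 2 (relFreq (pairCount x (x r.castSucc)) (x r.succ)) =
      m * empEntropy1 x := by
  rcases m.eq_zero_or_pos with rfl | hm
  · simp
  rw [sum_consecutive_eq_sum_pairCount_nsmul x fun a b =>
    -Real.logb 2 (relFreq (pairCount x a) b)]
  simp only [empEntropy1, Finset.mul_sum]
  refine Finset.sum_congr rfl fun a _ => Finset.sum_congr rfl fun b _ => ?_
  rw [relFreq, ← Real.logb_inv, inv_div, nsmul_eq_mul, Nat.cast_add_one, add_sub_cancel_right,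
    ← mul_assoc, mul_div_cancel₀ _ (by positivity)]
  rfl

end PairCount

section TwoPartCode

variable {α : Type*} [Fintype α] {m : ℕ} (C : α → α → ℕ)

/-- The weight of a matrix of counts, with independent entries weighted by `intWeight`. -/
noncomputable def matrixWeight : ℝ :=
  ∏ a, ∏ b, intWeight (C a b)

/-- The law of the Markov chain started uniformly whose transition probabilities from `a` are the
relative frequencies in row `a` of `C`. -/
noncomputable def chainWeight (x : Fin (m + 1) → α) : ℝ :=
  markovWeight (fun _ => (Fintype.card α : ℝ)⁻¹) (fun a => relFreq (C a)) x

lemma matrixWeight_pos : 0 < matrixWeight C :=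
  Finset.prod_pos fun _ _ => Finset.prod_pos fun _ _ => intWeight_pos _

lemma isSubprobability_matrixWeight (α : Type*) [Fintype α] :
    IsSubprobability fun C : α → α → ℕ => matrixWeight C :=
  isSubprobability_intWeight.pi.pi

lemma isSubprobability_chainWeight (m : ℕ) :
    IsSubprobability fun x : Fin (m + 1) → α => chainWeight C x :=
  isSubprobability_markovWeight (isSubprobability_uniform α)
    (fun a => isSubprobability_relFreq (C a)) m

end TwoPartCode

section EmpiricalCode

variable {k m : ℕ} (x : Fin (m + 1) → Fin k)

/-- The weight of `x` under the two-part code: the matrix of pair counts first, then `x` by the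
Markov chain fitted to that matrix. -/
noncomputable def codeWeight : ℝ :=
  matrixWeight (pairCount x) * chainWeight (pairCount x) x

lemma isSubprobability_codeWeight (k m : ℕ) :
    IsSubprobability fun x : Fin (m + 1) → Fin k => codeWeight x :=
  (isSubprobability_matrixWeight (Fin k)).twoPart (fun C => isSubprobability_chainWeight C m)
    pairCount

lemma relFreq_pairCount_consecutive_pos (r : Fin m) :
    0 < relFreq (pairCount x (x r.castSucc)) (x r.succ) :=
  relFreq_pos _ (pairCount_consecutive_pos x r)

lemma chainWeight_pairCount_pos : 0 < chainWeight (pairCount x) x := by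
  have : Nonempty (Fin k) := ⟨x 0⟩
  exact mul_pos (inv_pos.mpr (Nat.cast_pos.mpr Fintype.card_pos))
    (Finset.prod_pos fun r _ => relFreq_pairCount_consecutive_pos x r)

lemma codeWeight_pos : 0 < codeWeight x :=
  mul_pos (matrixWeight_pos _) (chainWeight_pairCount_pos x)

lemma neg_logb_matrixWeight_pairCount_le :
    -Real.logb 2 (matrixWeight (pairCount x)) ≤
      2 * (k : ℝ) ^ 2 * Real.logb 2 ((m : ℝ) / (k : ℝ) ^ 2 + 1) + (k : ℝ) ^ 2 := by
  have : Nonempty (Fin k) := ⟨x 0⟩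
  have hcost := sum_neg_logb_intWeight_le fun p : Fin k × Fin k => pairCount x p.1 p.2
  have hlog : ∑ p : Fin k × Fin k, -Real.logb 2 (intWeight (pairCount x p.1 p.2)) =
      -Real.logb 2 (matrixWeight (pairCount x)) := by
    rw [matrixWeight, ← Fintype.prod_prod_type',
      Real.logb_prod _ _ fun _ _ => (intWeight_pos _).ne', Finset.sum_neg_distrib]
  rwa [hlog, Fintype.sum_prod_type, sum_pairCount, Fintype.card_prod, Fintype.card_fin,
    Nat.cast_mul, ← sq] at hcost

lemma neg_logb_chainWeight_pairCount :
    -Real.logb 2 (chainWeight (pairCount x) x) = Real.logb 2 k + m * empEntropy1 x := by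
  have hk : (k : ℝ) ≠ 0 := Nat.cast_ne_zero.mpr (Fin.pos (x 0)).ne'
  have hfreq (r : Fin m) := (relFreq_pairCount_consecutive_pos x r).ne'
  rw [chainWeight, markovWeight, Fintype.card_fin,
    Real.logb_mul (inv_ne_zero hk) (Finset.prod_ne_zero_iff.mpr fun r _ => hfreq r),
    Real.logb_inv, Real.logb_prod _ _ fun r _ => hfreq r, ← sum_neg_logb_relFreq_pairCount,
    Finset.sum_neg_distrib]
  ring

lemma neg_logb_codeWeight_le :
    -Real.logb 2 (codeWeight x) ≤
      2 * (k : ℝ) ^ 2 * Real.logb 2 ((m : ℝ) / (k : ℝ) ^ 2 + 1) + (k : ℝ) ^ 2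
        + Real.logb 2 k + m * empEntropy1 x := by
  rw [codeWeight, Real.logb_mul (matrixWeight_pos _).ne' (chainWeight_pairCount_pos x).ne']
  linarith [neg_logb_matrixWeight_pairCount_le x, neg_logb_chainWeight_pairCount x]

end EmpiricalCode

/-- **A single universal code achieving the first-order empirical entropy.**
For all `k ≥ 2`, `n ≥ 2` there is one Kraft length function `L̂` on `[k]^n` with
`L̂(x^n) ≤ 2k² log₂(n/k² + 1) + k² + log₂ k + (n−1) H₁(x^n) + 3` for every `x^n`. -/
theorem universal_code_empirical_entropy (k n : ℕ) (hk : 2 ≤ k) (hn : 2 ≤ n) :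
    ∃ L : (Fin n → Fin k) → ℕ, Kraft L ∧
      ∀ x : Fin n → Fin k,
        (L x : ℝ) ≤ 2 * (k : ℝ) ^ 2 * Real.logb 2 ((n : ℝ) / (k : ℝ) ^ 2 + 1)
          + (k : ℝ) ^ 2 + Real.logb 2 (k : ℝ) + ((n : ℝ) - 1) * empEntropy1 x + 3 := by
  obtain ⟨m, rfl⟩ : ∃ m, n = m + 1 := ⟨n - 1, by omega⟩
  obtain ⟨L, hkraft, hlength⟩ :=
    (isSubprobability_codeWeight k m).exists_kraft_length codeWeight_pos
  refine ⟨L, hkraft.sum_le_one Finset.univ, fun x => ?_⟩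
  have hmono : Real.logb 2 ((m : ℝ) / (k : ℝ) ^ 2 + 1) ≤
      Real.logb 2 (((m + 1 : ℕ) : ℝ) / (k : ℝ) ^ 2 + 1) := by
    refine Real.logb_le_logb_of_le one_lt_two (by positivity) ?_
    gcongr
    exact m.le_succ
  calc (L x : ℝ) ≤ -Real.logb 2 (codeWeight x) + 1 := hlength x
    _ ≤ 2 * (k : ℝ) ^ 2 * Real.logb 2 ((m : ℝ) / (k : ℝ) ^ 2 + 1) + (k : ℝ) ^ 2
          + Real.logb 2 k + m * empEntropy1 x + 3 := by
        linarith [neg_logb_codeWeight_le x]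
    _ ≤ _ := by
        rw [Nat.cast_add_one, add_sub_cancel_right, ← Nat.cast_add_one]
        gcongr

end Stmt14
end

section
/- Let K be a reversible k×k row-stochastic matrix with stationary distribution π having positive entries, S = {(a,b) : K_{ab} > 0}, K̃((a,b),(c,d)) = 1[b = c]·K(c,d) the tuple-chain kernel on S, and K̃* its multiplicative reversibilization with respect to π̃(a,b) = π_a K_{ab}. Let T be the involution matrix on S acting by (T M)((a,b),(c,d)) = M((b,a),(c,d)) (note (a,b) ∈ S implies (b,a) ∈ S by reversibility). Then T K̃ T = K̃*, and consequently for every integer r ≥ 1, (K̃*)^r K̃^r = (T K̃^r)². -/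
/-!
Conjugation by `T` swaps the coordinates of both indices, so the entry of `T K̃ T` at
`((a,b),(c,d))` is `1[a = d] K_{dc}`. The corresponding entry of `K̃*` is
`1[d = a] π_c K_{cd} K_{ab} / (π_a K_{ab})`, and detailed balance `π_c K_{cd} = π_d K_{dc}` makes
the two equal. As `T² = 1`, this says `T K̃ = K̃* T`, so `T K̃^r = (K̃*)^r T`, and
`(T K̃^r)² = (K̃*)^r T² K̃^r`.
-/

open scoped BigOperators

namespace Stmt16

attribute [local instance] Classical.propDecidable

noncomputable section

variable {k : ℕ}

/-- The state space `S = {(a,b) : K_{ab} > 0}` of the chain over consecutive tuples. -/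
def TupleState (K : Matrix (Fin k) (Fin k) ℝ) : Type :=
  {p : Fin k × Fin k // 0 < K p.1 p.2}

instance (K : Matrix (Fin k) (Fin k) ℝ) : Fintype (TupleState K) :=
  Subtype.fintype _

instance (K : Matrix (Fin k) (Fin k) ℝ) : DecidableEq (TupleState K) :=
  Subtype.instDecidableEq

/-- The kernel `K̃((a,b),(c,d)) = 1[b = c]·K(c,d)` of the tuple chain. -/
def Ktil (K : Matrix (Fin k) (Fin k) ℝ) : Matrix (TupleState K) (TupleState K) ℝ :=
  Matrix.of fun p q => if p.1.2 = q.1.1 then K q.1.1 q.1.2 else 0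

/-- The stationary distribution `π̃(a,b) = π_a K_{ab}` of the tuple chain. -/
def piTil (K : Matrix (Fin k) (Fin k) ℝ) (π : Fin k → ℝ) (p : TupleState K) : ℝ :=
  π p.1.1 * K p.1.1 p.1.2

/-- The multiplicative reversibilization
`K̃*((a,b),(c,d)) = π̃(c,d)·K̃((c,d),(a,b)) / π̃(a,b)`. -/
def Kstar (K : Matrix (Fin k) (Fin k) ℝ) (π : Fin k → ℝ) :
    Matrix (TupleState K) (TupleState K) ℝ :=
  Matrix.of fun p q => piTil K π q * Ktil K q p / piTil K π p


/-- The coordinate-swap involution matrix `T` on `S`, acting on matrices by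
`(T M)((a,b),(c,d)) = M((b,a),(c,d))`. -/
def swapT (K : Matrix (Fin k) (Fin k) ℝ) : Matrix (TupleState K) (TupleState K) ℝ :=
  Matrix.of fun p q => if q.1 = (p.1.2, p.1.1) then 1 else 0

lemma pow_mul_pow_eq_sq_of_involution_conj {M : Type*} [Monoid M] {t x y : M} (ht : t * t = 1)
    (hconj : t * x * t = y) (r : ℕ) : y ^ r * x ^ r = (t * x ^ r) ^ 2 := by
  have hsemi : SemiconjBy t x y := by
    rw [SemiconjBy, ← hconj, mul_assoc (t * x), ht, mul_one]
  calc y ^ r * x ^ r = y ^ r * (t * t) * x ^ r := by rw [ht, mul_one]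
    _ = y ^ r * t * (t * x ^ r) := by simp only [mul_assoc]
    _ = (t * x ^ r) ^ 2 := by rw [← (hsemi.pow_right r).eq, sq]

section TupleChain

variable {K : Matrix (Fin k) (Fin k) ℝ} {π : Fin k → ℝ}

/-- The coordinate swap `(a,b) ↦ (b,a)` as a permutation of `S`, for `K` whose set of positive
entries is symmetric. Its permutation matrix is `swapT K`. -/
def TupleState.swap (hsymm : ∀ i j, 0 < K i j → 0 < K j i) :
    Equiv.Perm (TupleState K) :=
  (Equiv.prodComm (Fin k) (Fin k)).subtypeEquiv fun _ => ⟨hsymm _ _, hsymm _ _⟩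

lemma swapT_eq_permMatrix (hsymm : ∀ i j, 0 < K i j → 0 < K j i) :
    swapT K = (TupleState.swap hsymm).permMatrix ℝ := by
  ext p q
  have hval : q.1 = (p.1.2, p.1.1) ↔ TupleState.swap hsymm p = q :=
    ⟨fun hq => Subtype.ext hq.symm, fun hq => hq ▸ rfl⟩
  simp only [swapT, Matrix.of_apply, Equiv.Perm.permMatrix, PEquiv.toMatrix_apply,
    Equiv.toPEquiv_apply, Option.mem_some_iff, hval]

lemma swapT_mul_self (hsymm : ∀ i j, 0 < K i j → 0 < K j i) :
    swapT K * swapT K = 1 := by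
  have hinvol : TupleState.swap hsymm * TupleState.swap hsymm = 1 := rfl
  rw [swapT_eq_permMatrix hsymm, ← Matrix.permMatrix_mul, hinvol, Matrix.permMatrix_one]

lemma swapT_mul_mul_swapT (hsymm : ∀ i j, 0 < K i j → 0 < K j i)
    (M : Matrix (TupleState K) (TupleState K) ℝ) :
    swapT K * M * swapT K = M.submatrix (TupleState.swap hsymm) (TupleState.swap hsymm) := by
  rw [swapT_eq_permMatrix hsymm, PEquiv.toMatrix_toPEquiv_mul, PEquiv.mul_toMatrix_toPEquiv]
  rfl

lemma pos_symm_of_detailedBalance (hrev : ∀ i j, π i * K i j = π j * K j i)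
    (hπ : ∀ i, 0 < π i) (i j : Fin k) (hij : 0 < K i j) : 0 < K j i := by
  have hflow : 0 < π j * K j i := hrev i j ▸ mul_pos (hπ i) hij
  exact (mul_pos_iff_of_pos_left (hπ j)).1 hflow

lemma Kstar_apply_of_detailedBalance (hrev : ∀ i j, π i * K i j = π j * K j i)
    (hπ : ∀ i, π i ≠ 0) (p q : TupleState K) :
    Kstar K π p q = if p.1.1 = q.1.2 then K q.1.2 q.1.1 else 0 := by
  obtain ⟨⟨a, b⟩, hab : 0 < K a b⟩ := p
  obtain ⟨⟨c, d⟩, _⟩ := q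
  change π c * K c d * (if d = a then K a b else 0) / (π a * K a b) = if a = d then K d c else 0
  obtain rfl | had := eq_or_ne a d
  · rw [if_pos rfl, if_pos rfl, hrev c a, mul_right_comm,
      mul_div_cancel_left₀ _ (mul_ne_zero (hπ a) hab.ne')]
  · rw [if_neg had, if_neg had.symm, mul_zero, zero_div]

lemma swapT_mul_Ktil_mul_swapT (hrev : ∀ i j, π i * K i j = π j * K j i)
    (hsymm : ∀ i j, 0 < K i j → 0 < K j i) (hπ : ∀ i, π i ≠ 0) :
    swapT K * Ktil K * swapT K = Kstar K π := by
  ext p q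
  rw [swapT_mul_mul_swapT hsymm, Kstar_apply_of_detailedBalance hrev hπ]
  rfl

end TupleChain

theorem swap_conj_Ktil_eq_Kstar_general (K : Matrix (Fin k) (Fin k) ℝ) (π : Fin k → ℝ)
    (hπ : ∀ i, 0 < π i) (hrev : ∀ i j, π i * K i j = π j * K j i) :
    swapT K * Ktil K * swapT K = Kstar K π ∧
    ∀ r : ℕ, Kstar K π ^ r * Ktil K ^ r = (swapT K * Ktil K ^ r) ^ 2 := by
  have hsymm := pos_symm_of_detailedBalance hrev hπ
  have hconj := swapT_mul_Ktil_mul_swapT hrev hsymm fun i => (hπ i).ne'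
  exact ⟨hconj, pow_mul_pow_eq_sq_of_involution_conj (swapT_mul_self hsymm) hconj⟩

/-- **Conjugation by the swap involution produces the reversibilization.**
For a reversible `K` with everywhere-positive stationary distribution `π`,
`T K̃ T = K̃*`, and consequently `(K̃*)^r K̃^r = (T K̃^r)²` for every `r ≥ 1`. -/
theorem swap_conj_Ktil_eq_Kstar (K : Matrix (Fin k) (Fin k) ℝ) (π : Fin k → ℝ)
    (hK0 : ∀ i j, 0 ≤ K i j) (hK1 : ∀ i, ∑ j, K i j = 1)
    (hπ0 : ∀ i, 0 < π i) (hπ1 : ∑ i, π i = 1)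
    (hrev : ∀ i j, π i * K i j = π j * K j i) :
    swapT K * Ktil K * swapT K = Kstar K π ∧
    ∀ r : ℕ, 1 ≤ r →
      Kstar K π ^ r * Ktil K ^ r = (swapT K * Ktil K ^ r) ^ 2 := by
  obtain ⟨hconj, hpow⟩ := swap_conj_Ktil_eq_Kstar_general K π hπ0 hrev
  exact ⟨hconj, fun r _ => hpow r⟩

end

end Stmt16
end

section
/- Let K be a k×k row-stochastic matrix and let M be the k²×k² matrix indexed by ordered pairs, with entries M((a,b),(c,d)) = K(a,c)·K(c,d). Then K and M have identical nonzero eigenvalues: a complex number η ≠ 0 is an eigenvalue of M if and only if it is an eigenvalue of K. -/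
open scoped BigOperators

/-!
The matrix `M` factors as `A * B`, where `A (a, b) c = K a c` and `B c (c', d) = δ_{c c'} K c d`.
Since the rows of `K` sum to one, `(B * A) c e = (∑ d, K c d) * K c e = K c e`. Jacobson's lemma,
that `1 - A * B` is invertible if and only if `1 - B * A` is, holds for rectangular `A` and `B`;
rescaling by `η⁻¹` shows that `A * B` and `B * A` have the same nonzero spectrum.
-/

section MulComm

variable {m n α : Type*} [Fintype m] [Fintype n] [DecidableEq m] [DecidableEq n] [Ring α]

theorem isUnit_one_sub_matrix_mul_swap {A : Matrix m n α} {B : Matrix n m α}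
    (h : IsUnit (1 - A * B)) : IsUnit (1 - B * A) := by
  obtain ⟨U, right_inv, left_inv⟩ := isUnit_iff_exists.mp h
  -- The inverse is suggested by the geometric series `∑ (B A)ⁱ = 1 + B (∑ (A B)ⁱ) A`.
  refine isUnit_iff_exists.mpr ⟨1 + B * U * A, ?_, ?_⟩
  · calc
      (1 - B * A) * (1 + B * U * A) = 1 - B * A + B * ((1 - A * B) * U) * A := by
        simp only [Matrix.sub_mul, Matrix.mul_sub, Matrix.mul_add, Matrix.mul_assoc,
          Matrix.one_mul, Matrix.mul_one]
      _ = 1 := by rw [right_inv, Matrix.mul_one, sub_add_cancel]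
  · calc
      (1 + B * U * A) * (1 - B * A) = 1 - B * A + B * (U * (1 - A * B)) * A := by
        simp only [Matrix.sub_mul, Matrix.mul_sub, Matrix.add_mul, Matrix.mul_assoc,
          Matrix.one_mul, Matrix.mul_one]
        abel
      _ = 1 := by rw [left_inv, Matrix.mul_one, sub_add_cancel]

theorem isUnit_one_sub_matrix_mul_comm (A : Matrix m n α) (B : Matrix n m α) :
    IsUnit (1 - A * B) ↔ IsUnit (1 - B * A) :=
  ⟨isUnit_one_sub_matrix_mul_swap, isUnit_one_sub_matrix_mul_swap⟩

theorem unit_mem_spectrum_matrix_mul_comm {R : Type*} [CommSemiring R] [Algebra R α]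
    (A : Matrix m n α) (B : Matrix n m α) (η : Rˣ) :
    (η : R) ∈ spectrum R (A * B) ↔ (η : R) ∈ spectrum R (B * A) := by
  have rescaled := isUnit_one_sub_matrix_mul_comm (η⁻¹ • A) B
  rw [Matrix.smul_mul, Matrix.mul_smul] at rescaled
  simpa only [spectrum.mem_iff, not_iff_not, Algebra.algebraMap_eq_smul_one, ← Units.smul_def,
    IsUnit.smul_sub_iff_sub_inv_smul] using rescaled

end MulComm

section AppendStep

variable {l m n α : Type*} [DecidableEq n]

/-- The transition matrix from states to pairs that keeps the current state `c` and appends `d`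
with weight `L c d`. It is the right factor of the tuple matrix; the left factor
`K.submatrix Prod.fst id` forgets the second coordinate of a pair and then moves by `K`. -/
def appendStep [Zero α] (L : Matrix n m α) : Matrix n (n × m) α :=
  Matrix.of fun c q => if c = q.1 then L c q.2 else 0

variable [Fintype n]

theorem mul_appendStep_apply [NonUnitalNonAssocSemiring α] (A : Matrix l n α) (L : Matrix n m α)
    (i : l) (q : n × m) : (A * appendStep L) i q = A i q.1 * L q.1 q.2 := by
  simp [appendStep, Matrix.mul_apply]

theorem appendStep_mul_submatrix_fst_apply [Fintype m] [NonUnitalNonAssocSemiring α]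
    (L : Matrix n m α) (K : Matrix n l α) (c : n) (e : l) :
    (appendStep L * K.submatrix (Prod.fst : n × m → n) id) c e = (∑ d, L c d) * K c e := by
  simp only [appendStep, Matrix.mul_apply, Matrix.of_apply, Matrix.submatrix_apply, id,
    Fintype.sum_prod_type_right, ite_mul, zero_mul, Finset.sum_ite_eq, Finset.mem_univ, if_true,
    Finset.sum_mul]

end AppendStep

theorem tuple_matrix_nonzero_spectrum_general {R α m n : Type*} [CommSemiring R] [Ring α]
    [Algebra R α] [Fintype m] [Fintype n] [DecidableEq m] [DecidableEq n]
    (K : Matrix n n α) (L : Matrix n m α) (hL : ∀ i, ∑ j, L i j = 1) (η : Rˣ) :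
    (η : R) ∈ spectrum R (Matrix.of fun p q : n × m => K p.1 q.1 * L q.1 q.2) ↔
      (η : R) ∈ spectrum R K := by
  have tuple_eq : (Matrix.of fun p q : n × m => K p.1 q.1 * L q.1 q.2) =
      K.submatrix (Prod.fst : n × m → n) id * appendStep L := by
    ext p q
    exact (mul_appendStep_apply (K.submatrix Prod.fst id) L p q).symm
  have swapped_eq : appendStep L * K.submatrix (Prod.fst : n × m → n) id = K := by
    ext c e
    rw [appendStep_mul_submatrix_fst_apply, hL, one_mul]
  rw [tuple_eq, unit_mem_spectrum_matrix_mul_comm, swapped_eq]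

/-- **The tuple-chain comparison matrix has the same nonzero spectrum as `K`.**
Let `K` be a `k×k` row-stochastic matrix and let `M` be the `k²×k²` matrix with
entries `M((a,b),(c,d)) = K(a,c)·K(c,d)`.  Then a nonzero `η ∈ ℂ` is an eigenvalue
of `M` iff it is an eigenvalue of `K`. -/
theorem tuple_matrix_nonzero_spectrum (k : ℕ) (K : Matrix (Fin k) (Fin k) ℝ)
    (hK0 : ∀ i j, 0 ≤ K i j) (hK1 : ∀ i, ∑ j, K i j = 1)
    (η : ℂ) (hη : η ≠ 0) :
    η ∈ spectrum ℂ
        ((Matrix.of fun p q : Fin k × Fin k => K p.1 q.1 * K q.1 q.2).map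
          (Complex.ofReal ·)) ↔
      η ∈ spectrum ℂ (K.map (Complex.ofReal ·)) := by
  have hKℂ : ∀ i, ∑ j, K.map (Complex.ofReal ·) i j = 1 := by simp [← Complex.ofReal_sum, hK1]
  simpa [Matrix.map] using!
    tuple_matrix_nonzero_spectrum_general (K.map (Complex.ofReal ·)) _ hKℂ (Units.mk0 η hη)
end
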